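/- (Non-identifiability of duplicate columns) In the Boolean OR mixture model, suppose two distinct columns a ≠ b of G are identical (g_{ia} = g_{ib} for all i). Let p′ = (p′_1,…,p′_n) be any other parameter vector in [0,1]^n with p′_j = p_j for all j ∉ {a, b} and (1 − p′_a)(1 − p′_b) = (1 − p_a)(1 − p_b), and let y′ be independent Bernoulli sources with parameters p′. Then G ⊗ y and G ⊗ y′ have the same joint distribution on {0,1}^m; hence sources with identical columns cannot be distinguished from binary observations. -/

import Mathlib

/-- Boolean OR mixture: `x i = ⋁_j (g i j ∧ y j)`. -/
def orMix {ι κ : Type*} [Fintype κ] (G : ι → κ → Bool) (y : κ → Bool) (i : ι) : Bool :=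
  decide (∃ j, G i j = true ∧ y j = true)

/-- Weight of a configuration `y` under independent Bernoulli sources with
parameters `p`. -/
noncomputable def bweight {κ : Type*} [Fintype κ] (p : κ → ℝ) (y : κ → Bool) : ℝ :=
  ∏ j, if y j then p j else 1 - p j

open Classical in
/-- Probability of an event `E` under independent Bernoulli sources with
parameters `p`. -/
noncomputable def bprob {κ : Type*} [Fintype κ] [DecidableEq κ] (p : κ → ℝ)
    (E : (κ → Bool) → Prop) : ℝ :=
  ∑ y : κ → Bool, if E y then bweight p y else 0

/-!
The outputs indexed by a set `A` all vanish iff every source feeding `A` is off, which has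
probability `∏ (1 - p j)` over those sources. Two sources with the same column feed the same
sets `A`, so these probabilities see the parameters only through the product of `1 - p j` over
each class of equal columns. By inclusion-exclusion they determine the law of the output.
-/

theorem prod_eq_prod_of_mul_eq_mul {α M : Type*} [CommMonoid M] {f g : α → M} {a b : α}
    (hab : a ≠ b) (hoff : ∀ j, j ≠ a → j ≠ b → f j = g j) (hmul : f a * f b = g a * g b)
    {s : Finset α} (hs : a ∈ s ↔ b ∈ s) : ∏ j ∈ s, f j = ∏ j ∈ s, g j := by
  classical
  by_cases ha : a ∈ s
  · have hsub : {a, b} ⊆ s := by simp [Finset.insert_subset_iff, ha, hs.mp ha]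
    rw [← Finset.prod_sdiff hsub, ← Finset.prod_sdiff hsub, Finset.prod_pair hab,
      Finset.prod_pair hab, hmul]
    congr 1
    exact Finset.prod_congr rfl fun j hj => by
      simp only [Finset.mem_sdiff, Finset.mem_insert, Finset.mem_singleton, not_or] at hj
      exact hoff j hj.2.1 hj.2.2
  · have hb : b ∉ s := fun h => ha (hs.mpr h)
    exact Finset.prod_congr rfl fun j hj =>
      hoff j (ne_of_mem_of_not_mem hj ha) (ne_of_mem_of_not_mem hj hb)

section

variable {ι κ : Type*}

theorem exists_finset_forall_mem_iff_forall {α : Type*} [Finite α] (P : α → ι → Prop) :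
    ∃ F : Finset ι, ∀ x, (∀ i ∈ F, P x i) ↔ ∀ i, P x i := by
  classical
  have := Fintype.ofFinite α
  have exists_witness (x : α) : ∃ F : Finset ι, (∀ i ∈ F, P x i) → ∀ i, P x i := by
    by_cases h : ∀ i, P x i
    · exact ⟨∅, fun _ => h⟩
    · obtain ⟨i, hi⟩ := not_forall.mp h
      exact ⟨{i}, fun hF => absurd (hF i (Finset.mem_singleton_self i)) hi⟩
  choose F hF using exists_witness
  exact ⟨Finset.univ.biUnion F, fun x => ⟨fun h => hF x fun i hi =>
    h i (Finset.mem_biUnion.mpr ⟨x, Finset.mem_univ x, hi⟩), fun h i _ => h i⟩⟩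

variable [Fintype κ]

theorem orMix_eq_false_iff (G : ι → κ → Bool) (y : κ → Bool) (i : ι) :
    orMix G y i = false ↔ ∀ j, G i j = true → y j = false := by
  simp [orMix]

variable [DecidableEq κ]

theorem bprob_and_add_bprob_and_not (p : κ → ℝ) (E F : (κ → Bool) → Prop) :
    bprob p (fun y => E y ∧ F y) + bprob p (fun y => E y ∧ ¬F y) = bprob p E := by
  simp only [bprob, ← Finset.sum_add_distrib]
  refine Finset.sum_congr rfl fun y _ => ?_
  by_cases hE : E y <;> by_cases hF : F y <;> simp [hE, hF]

theorem bprob_forall_mem_eq_false (p : κ → ℝ) (T : Finset κ) :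
    bprob p (fun y => ∀ j ∈ T, y j = false) = ∏ j ∈ T, (1 - p j) := by
  let w (j : κ) (s : Bool) : ℝ := if s then (if j ∈ T then 0 else p j) else 1 - p j
  have weight_eq (y : κ → Bool) :
      (if ∀ j ∈ T, y j = false then bweight p y else 0) = ∏ j, w j (y j) := by
    split_ifs with hy
    · exact Finset.prod_congr rfl fun j _ => by by_cases hj : j ∈ T <;> simp [w, hj, hy]
    · push Not at hy
      obtain ⟨j, hjT, hj⟩ := hy
      exact (Finset.prod_eq_zero (Finset.mem_univ j) (by simp_all [w])).symm
  have marginal_eq (j : κ) : ∑ s, w j s = if j ∈ T then 1 - p j else 1 := by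
    by_cases hj : j ∈ T <;> simp [w, hj]
  calc bprob p (fun y => ∀ j ∈ T, y j = false)
      = ∑ y : κ → Bool, ∏ j, w j (y j) := by
        simp only [bprob, ← weight_eq]
        congr!
    _ = ∏ j, ∑ s, w j s := (Fintype.prod_sum w).symm
    _ = ∏ j ∈ T, (1 - p j) := by
        simp only [marginal_eq, Finset.prod_ite_mem, Finset.univ_inter]

theorem bprob_forall_mem_orMix_eq_false (p : κ → ℝ) (G : ι → κ → Bool) (A : Finset ι) :
    bprob p (fun y => ∀ i ∈ A, orMix G y i = false)
      = ∏ j with ∃ i ∈ A, G i j = true, (1 - p j) := by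
  rw [← bprob_forall_mem_eq_false]
  congr 1 with y
  simp only [orMix_eq_false_iff, Finset.mem_filter_univ]
  grind

theorem bprob_cylinder_congr_of_forall_mem_eq_false {p p' : κ → ℝ}
    {X : (κ → Bool) → ι → Bool}
    (hX : ∀ A : Finset ι, bprob p (fun y => ∀ i ∈ A, X y i = false)
      = bprob p' (fun y => ∀ i ∈ A, X y i = false)) (A B : Finset ι) :
    bprob p (fun y => (∀ i ∈ A, X y i = false) ∧ ∀ i ∈ B, X y i = true)
      = bprob p' (fun y => (∀ i ∈ A, X y i = false) ∧ ∀ i ∈ B, X y i = true) := by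
  classical
  induction B using Finset.induction_on generalizing A with
  | empty => simpa using hX A
  | insert k B _ ih =>
    have bprob_insert (q : κ → ℝ) :
        bprob q (fun y => (∀ i ∈ A, X y i = false) ∧ ∀ i ∈ insert k B, X y i = true)
          = bprob q (fun y => (∀ i ∈ A, X y i = false) ∧ ∀ i ∈ B, X y i = true)
            - bprob q (fun y =>
                (∀ i ∈ insert k A, X y i = false) ∧ ∀ i ∈ B, X y i = true) := by
      rw [← bprob_and_add_bprob_and_not q
        (fun y => (∀ i ∈ A, X y i = false) ∧ ∀ i ∈ B, X y i = true)
        (fun y => X y k = true), eq_sub_iff_add_eq]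
      congr 2 <;> ext y <;> simp only [Finset.forall_mem_insert, Bool.not_eq_true] <;> tauto
    rw [bprob_insert, bprob_insert, ih, ih]

theorem bprob_forall_eq_congr_of_forall_mem_eq_false {p p' : κ → ℝ}
    {X : (κ → Bool) → ι → Bool}
    (hX : ∀ A : Finset ι, bprob p (fun y => ∀ i ∈ A, X y i = false)
      = bprob p' (fun y => ∀ i ∈ A, X y i = false)) (v : ι → Bool) :
    bprob p (fun y => ∀ i, X y i = v i) = bprob p' (fun y => ∀ i, X y i = v i) := by
  obtain ⟨F, hF⟩ := exists_finset_forall_mem_iff_forall fun y i => X y i = v i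
  have event_eq : (fun y => ∀ i, X y i = v i) = fun y =>
      (∀ i ∈ F.filter (v · = false), X y i = false) ∧
        ∀ i ∈ F.filter (v · = true), X y i = true := by
    ext y
    simp only [← hF, Finset.mem_filter, and_imp, ← forall_and]
    refine forall_congr' fun i => ?_
    cases v i <;> simp
  rw [event_eq]
  exact bprob_cylinder_congr_of_forall_mem_eq_false hX _ _

theorem or_mixture_duplicate_columns_nonidentifiable_general [DecidableEq (ι → Bool)]
    (G : ι → κ → Bool) {p p' : κ → ℝ}
    (hprod : ∀ c : ι → Bool,
      ∏ j with (fun i => G i j) = c, (1 - p' j) = ∏ j with (fun i => G i j) = c, (1 - p j))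
    (v : ι → Bool) :
    bprob p (fun y => ∀ i, orMix G y i = v i)
      = bprob p' (fun y => ∀ i, orMix G y i = v i) := by
  refine bprob_forall_eq_congr_of_forall_mem_eq_false (fun A => ?_) v
  let columns : Finset (ι → Bool) := Finset.univ.image fun j i => G i j
  have prod_fiberwise (q : κ → ℝ) : ∏ j with ∃ i ∈ A, G i j = true, (1 - q j)
      = ∏ c ∈ columns with ∃ i ∈ A, c i = true,
          ∏ j with (fun i => G i j) = c, (1 - q j) := by
    simp [Finset.prod_fiberwise_eq_prod_filter, columns]
  simp only [bprob_forall_mem_orMix_eq_false, prod_fiberwise, hprod]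

end

/-- (Non-identifiability of duplicate columns).  If two distinct columns
`a ≠ b` of `G` are identical and `p'` agrees with `p` off `{a, b}` with
`(1-p'_a)(1-p'_b) = (1-p_a)(1-p_b)`, then `G ⊗ y` and `G ⊗ y'` have the same
joint distribution on `{0,1}^m`. -/
theorem or_mixture_duplicate_columns_nonidentifiable (m n : ℕ)
    (G : Fin m → Fin n → Bool) (p p' : Fin n → ℝ)
    (hp : ∀ j, p j ∈ Set.Icc (0 : ℝ) 1) (hp' : ∀ j, p' j ∈ Set.Icc (0 : ℝ) 1)
    (a b : Fin n) (hab : a ≠ b) (hcols : ∀ i, G i a = G i b)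
    (hagree : ∀ j, j ∉ ({a, b} : Set (Fin n)) → p' j = p j)
    (hprod : (1 - p' a) * (1 - p' b) = (1 - p a) * (1 - p b))
    (v : Fin m → Bool) :
    bprob p (fun y => ∀ i, orMix G y i = v i)
      = bprob p' (fun y => ∀ i, orMix G y i = v i) := by
  refine or_mixture_duplicate_columns_nonidentifiable_general G (fun c => ?_) v
  exact prod_eq_prod_of_mul_eq_mul hab (fun j ha hb => by rw [hagree j (by simp [ha, hb])])
    hprod (by simp [hcols])
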